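/- For every 𝒜 ⊆ {M, C, N}, the end-active variant of the linear nested sequent calculus LNS_E𝒜ConW is complete with respect to the logic E𝒜: if A ∈ E𝒜 then ⇒ A is derivable in the end-active variant of LNS_E𝒜ConW. -/

import Mathlib

/-- Monomodal formulas. -/
inductive Fm : Type
  | var : ℕ → Fm
  | bot : Fm
  | top : Fm
  | neg : Fm → Fm
  | and : Fm → Fm → Fm
  | or : Fm → Fm → Fm
  | imp : Fm → Fm → Fm
  | box : Fm → Fm

/-- Evaluation of the propositional structure of a formula under an assignment
`v` of truth values to formulas (only used on atoms, i.e. propositional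
variables and boxed formulas). -/
def evalP (v : Fm → Prop) : Fm → Prop
  | .var n => v (.var n)
  | .bot => False
  | .top => True
  | .neg A => ¬ evalP v A
  | .and A B => evalP v A ∧ evalP v B
  | .or A B => evalP v A ∨ evalP v B
  | .imp A B => evalP v A → evalP v B
  | .box A => v (.box A)

/-- `A` is an instance of a classical propositional tautology. -/
def Taut (A : Fm) : Prop := ∀ v, evalP v A

/-- A component of a (linear nested) sequent: a two-sided multiset sequent. -/
abbrev Cmp := Multiset Fm × Multiset Fm

/-- A set `𝒜 ⊆ {M, C, N}` of additional axioms for classical modal logic `E`. -/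
structure EAx where
  m : Bool := false
  c : Bool := false
  n : Bool := false

/-- Hilbert-style theoremhood in the non-normal modal logic `E𝒜`: classical
propositional logic, the congruence rule, and the axioms among
`M : □(A∧B) → (□A ∧ □B)`, `C : (□A ∧ □B) → □(A∧B)` and `N : □⊤` in `𝒜`. -/
inductive EThm (Ax : EAx) : Fm → Prop
  | taut {A} : Taut A → EThm Ax A
  | mp {A B} : EThm Ax (.imp A B) → EThm Ax A → EThm Ax B
  | cong {A B} : EThm Ax (.imp A B) → EThm Ax (.imp B A) →
      EThm Ax (.imp (.box A) (.box B))
  | axM {A B} : Ax.m = true →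
      EThm Ax (.imp (.box (.and A B)) (.and (.box A) (.box B)))
  | axC {A B} : Ax.c = true →
      EThm Ax (.imp (.and (.box A) (.box B)) (.box (.and A B)))
  | axN : Ax.n = true → EThm Ax (.box .top)

/-- A linear nested sequent of type `LNS^e`: a (nonempty) list of components
joined by the nesting `⫽`, optionally terminated by a binary nesting
`⫽ᵉ(Σ ⇒ Π; Ω ⇒ Θ)`. -/
abbrev LNSe := List Cmp × Option (Cmp × Cmp)

/-- The end-active variant of the calculus `LNS_E𝒜` (optionally with internal
contraction `con` and weakening `wk`): all rule applications are restricted so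
that the active components are the rightmost ones.  The modal rules are always
end-active; the propositional and structural rules are restricted to the last
component. -/
inductive EDe (Ax : EAx) (con wk : Bool) : LNSe → Prop
  | init {pre : List Cmp} {Γ Δ : Multiset Fm} {m : ℕ} :
      EDe Ax con wk (pre ++ [(Fm.var m ::ₘ Γ, Fm.var m ::ₘ Δ)], none)
  | botL {pre Γ Δ} :
      EDe Ax con wk (pre ++ [(Fm.bot ::ₘ Γ, Δ)], none)
  | topR {pre Γ Δ} :
      EDe Ax con wk (pre ++ [(Γ, Fm.top ::ₘ Δ)], none)
  | negL {pre Γ Δ A} :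
      EDe Ax con wk (pre ++ [(Γ, A ::ₘ Δ)], none) →
      EDe Ax con wk (pre ++ [(Fm.neg A ::ₘ Γ, Δ)], none)
  | negR {pre Γ Δ A} :
      EDe Ax con wk (pre ++ [(A ::ₘ Γ, Δ)], none) →
      EDe Ax con wk (pre ++ [(Γ, Fm.neg A ::ₘ Δ)], none)
  | andL {pre Γ Δ A B} :
      EDe Ax con wk (pre ++ [(A ::ₘ B ::ₘ Γ, Δ)], none) →
      EDe Ax con wk (pre ++ [(Fm.and A B ::ₘ Γ, Δ)], none)
  | andR {pre Γ Δ A B} :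
      EDe Ax con wk (pre ++ [(Γ, A ::ₘ Δ)], none) →
      EDe Ax con wk (pre ++ [(Γ, B ::ₘ Δ)], none) →
      EDe Ax con wk (pre ++ [(Γ, Fm.and A B ::ₘ Δ)], none)
  | orL {pre Γ Δ A B} :
      EDe Ax con wk (pre ++ [(A ::ₘ Γ, Δ)], none) →
      EDe Ax con wk (pre ++ [(B ::ₘ Γ, Δ)], none) →
      EDe Ax con wk (pre ++ [(Fm.or A B ::ₘ Γ, Δ)], none)
  | orR {pre Γ Δ A B} :
      EDe Ax con wk (pre ++ [(Γ, A ::ₘ B ::ₘ Δ)], none) →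
      EDe Ax con wk (pre ++ [(Γ, Fm.or A B ::ₘ Δ)], none)
  | impL {pre Γ Δ A B} :
      EDe Ax con wk (pre ++ [(B ::ₘ Γ, Δ)], none) →
      EDe Ax con wk (pre ++ [(Γ, A ::ₘ Δ)], none) →
      EDe Ax con wk (pre ++ [(Fm.imp A B ::ₘ Γ, Δ)], none)
  | impR {pre Γ Δ A B} :
      EDe Ax con wk (pre ++ [(A ::ₘ Γ, B ::ₘ Δ)], none) →
      EDe Ax con wk (pre ++ [(Γ, Fm.imp A B ::ₘ Δ)], none)
  | conL {pre Γ Δ A} : con = true →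
      EDe Ax con wk (pre ++ [(A ::ₘ A ::ₘ Γ, Δ)], none) →
      EDe Ax con wk (pre ++ [(A ::ₘ Γ, Δ)], none)
  | conR {pre Γ Δ A} : con = true →
      EDe Ax con wk (pre ++ [(Γ, A ::ₘ A ::ₘ Δ)], none) →
      EDe Ax con wk (pre ++ [(Γ, A ::ₘ Δ)], none)
  | wkL {pre Γ Δ A} : wk = true →
      EDe Ax con wk (pre ++ [(Γ, Δ)], none) →
      EDe Ax con wk (pre ++ [(A ::ₘ Γ, Δ)], none)
  | wkR {pre Γ Δ A} : wk = true →
      EDe Ax con wk (pre ++ [(Γ, Δ)], none) →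
      EDe Ax con wk (pre ++ [(Γ, A ::ₘ Δ)], none)
  | boxRe {G Γ Δ B} :
      EDe Ax con wk (G ++ [(Γ, Δ)], some ((0, {B}), ({B}, 0))) →
      EDe Ax con wk (G ++ [(Γ, Fm.box B ::ₘ Δ)], none)
  | boxLe {G Γ Δ Sg Pp Om Th A} :
      EDe Ax con wk (G ++ [(Γ, Δ), (A ::ₘ Sg, Pp)], none) →
      EDe Ax con wk (G ++ [(Γ, Δ), (Om, A ::ₘ Th)], none) →
      EDe Ax con wk (G ++ [(Fm.box A ::ₘ Γ, Δ)], some ((Sg, Pp), (Om, Th)))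
  | ruleN {G Γ Δ B} : Ax.n = true →
      EDe Ax con wk (G ++ [(Γ, Δ), (0, {B})], none) →
      EDe Ax con wk (G ++ [(Γ, Fm.box B ::ₘ Δ)], none)
  | ruleM {c G Sg Pp Om Th} : Ax.m = true →
      EDe Ax con wk (c :: G, some ((Sg, Pp), (Fm.bot ::ₘ Om, Th))) →
      EDe Ax con wk (c :: G, some ((Sg, Pp), (Om, Th)))
  | ruleC {G Γ Δ Sg Pp Om Th A} : Ax.c = true →
      EDe Ax con wk (G ++ [(Γ, Δ)], some ((A ::ₘ Sg, Pp), (Om, Th))) →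
      EDe Ax con wk (G ++ [(Γ, Δ), (Om, A ::ₘ Th)], none) →
      EDe Ax con wk (G ++ [(Fm.box A ::ₘ Γ, Δ)], some ((Sg, Pp), (Om, Th)))

/-- Derivability in the last component under every prefix. -/
def SD (Ax : EAx) (Γ Δ : Multiset Fm) : Prop :=
  ∀ pre : List Cmp, EDe Ax true true (pre ++ [(Γ, Δ)], none)

theorem SD.weakL {Ax : EAx} {Γ Δ : Multiset Fm} (h : SD Ax Γ Δ) (Γ' : Multiset Fm) :
    SD Ax (Γ' + Γ) Δ := by
  induction Γ' using Multiset.induction_on with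
  | empty => simpa using h
  | cons a s ih => intro pre; rw [Multiset.cons_add]; exact EDe.wkL rfl (ih pre)

theorem SD.weakR {Ax : EAx} {Γ Δ : Multiset Fm} (h : SD Ax Γ Δ) (Δ' : Multiset Fm) :
    SD Ax Γ (Δ' + Δ) := by
  induction Δ' using Multiset.induction_on with
  | empty => simpa using h
  | cons a s ih => intro pre; rw [Multiset.cons_add]; exact EDe.wkR rfl (ih pre)

theorem SD.absL {Ax : EAx} {Γ Γ' Δ : Multiset Fm} (h : SD Ax (Γ + Γ') Δ)
    (hs : ∀ a ∈ Γ, a ∈ Γ') : SD Ax Γ' Δ := by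
  induction Γ using Multiset.induction_on with
  | empty => simpa using h
  | cons a s ih =>
    apply ih _ (fun b hb => hs b (Multiset.mem_cons_of_mem hb))
    obtain ⟨t, rfl⟩ := Multiset.exists_cons_of_mem (hs a (Multiset.mem_cons_self a s))
    intro pre
    have := h pre
    rw [Multiset.cons_add, Multiset.add_cons] at this
    rw [Multiset.add_cons]
    exact EDe.conL rfl this

theorem SD.absR {Ax : EAx} {Γ Δ Δ' : Multiset Fm} (h : SD Ax Γ (Δ + Δ'))
    (hs : ∀ a ∈ Δ, a ∈ Δ') : SD Ax Γ Δ' := by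
  induction Δ using Multiset.induction_on with
  | empty => simpa using h
  | cons a s ih =>
    apply ih _ (fun b hb => hs b (Multiset.mem_cons_of_mem hb))
    obtain ⟨t, rfl⟩ := Multiset.exists_cons_of_mem (hs a (Multiset.mem_cons_self a s))
    intro pre
    have := h pre
    rw [Multiset.cons_add, Multiset.add_cons] at this
    rw [Multiset.add_cons]
    exact EDe.conR rfl this

theorem SD.mono {Ax : EAx} {Γ Γ' Δ Δ' : Multiset Fm} (h : SD Ax Γ Δ)
    (h1 : ∀ a ∈ Γ, a ∈ Γ') (h2 : ∀ a ∈ Δ, a ∈ Δ') : SD Ax Γ' Δ' := by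
  have a1 := h.weakL Γ'
  rw [add_comm] at a1
  have a2 := (a1.absL h1).weakR Δ'
  rw [add_comm] at a2
  exact a2.absR h2

/-- Consistency of a set of signed formulas. -/
def Cons (Ax : EAx) (X : Set (Fm ⊕ Fm)) : Prop :=
  ∀ Γ Δ : Multiset Fm, (∀ a ∈ Γ, Sum.inl a ∈ X) → (∀ a ∈ Δ, Sum.inr a ∈ X) → ¬ SD Ax Γ Δ

def World (Ax : EAx) : Type := {X : Set (Fm ⊕ Fm) // Maximal (Cons Ax) X}

theorem Cons.anti {Ax : EAx} {X Y : Set (Fm ⊕ Fm)} (h : Cons Ax X) (hY : Y ⊆ X) : Cons Ax Y :=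
  fun Γ Δ h1 h2 => h Γ Δ (fun a ha => hY (h1 a ha)) (fun a ha => hY (h2 a ha))

theorem Cons.finChar (Ax : EAx) : Order.IsOfFiniteCharacter {X | Cons Ax X} := by
  intro X
  constructor
  · intro h Y hY _
    exact Cons.anti h hY
  · intro h Γ Δ h1 h2
    have hf : ((Sum.inl '' {a | a ∈ Γ}) ∪ (Sum.inr '' {a | a ∈ Δ}) : Set (Fm ⊕ Fm)).Finite :=
      (Γ.finite_toSet.image _).union (Δ.finite_toSet.image _)
    refine h ((Sum.inl '' {a | a ∈ Γ}) ∪ (Sum.inr '' {a | a ∈ Δ})) ?_ hf Γ Δ ?_ ?_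
    · rintro _ (⟨a, ha, rfl⟩ | ⟨a, ha, rfl⟩)
      · exact h1 a ha
      · exact h2 a ha
    · intro a ha; exact Or.inl ⟨a, ha, rfl⟩
    · intro a ha; exact Or.inr ⟨a, ha, rfl⟩

theorem exists_world {Ax : EAx} {Γ Δ : Multiset Fm} (h : ¬ SD Ax Γ Δ) :
    ∃ w : World Ax, (∀ a ∈ Γ, Sum.inl a ∈ w.1) ∧ (∀ a ∈ Δ, Sum.inr a ∈ w.1) := by
  have hc : Cons Ax ((Sum.inl '' {a | a ∈ Γ}) ∪ (Sum.inr '' {a | a ∈ Δ})) := by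
    intro Γ' Δ' h1 h2 h3
    refine h (h3.mono (fun a ha => ?_) (fun a ha => ?_))
    · simpa using h1 a ha
    · simpa using h2 a ha
  obtain ⟨m, hm, hm'⟩ := (Cons.finChar Ax).exists_maximal hc
  exact ⟨⟨m, hm'⟩, fun a ha => hm (Or.inl ⟨a, ha, rfl⟩), fun a ha => hm (Or.inr ⟨a, ha, rfl⟩)⟩

theorem World.extL {Ax : EAx} (w : World Ax) {A : Fm} (h : Sum.inl A ∉ w.1) :
    ∃ Γ Δ : Multiset Fm, (∀ a ∈ Γ, Sum.inl a ∈ w.1) ∧ (∀ a ∈ Δ, Sum.inr a ∈ w.1) ∧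
      SD Ax (A ::ₘ Γ) Δ := by
  classical
  have : ¬ Cons Ax (insert (Sum.inl A) w.1) := fun hc =>
    h (w.2.2 hc (Set.subset_insert _ _) (Set.mem_insert _ _))
  unfold Cons at this
  push Not at this
  obtain ⟨Γ, Δ, h1, h2, h3⟩ := this
  refine ⟨Γ.filter (· ≠ A), Δ, fun a ha => ?_, fun a ha => ?_, h3.mono (fun a ha => ?_) (fun a ha => ha)⟩
  · rw [Multiset.mem_filter] at ha
    have := h1 a ha.1
    simpa [ha.2] using this
  · simpa using h2 a ha
  · by_cases e : a = A
    · simp [e]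
    · simp [e, ha]

theorem World.extR {Ax : EAx} (w : World Ax) {A : Fm} (h : Sum.inr A ∉ w.1) :
    ∃ Γ Δ : Multiset Fm, (∀ a ∈ Γ, Sum.inl a ∈ w.1) ∧ (∀ a ∈ Δ, Sum.inr a ∈ w.1) ∧
      SD Ax Γ (A ::ₘ Δ) := by
  classical
  have : ¬ Cons Ax (insert (Sum.inr A) w.1) := fun hc =>
    h (w.2.2 hc (Set.subset_insert _ _) (Set.mem_insert _ _))
  unfold Cons at this
  push Not at this
  obtain ⟨Γ, Δ, h1, h2, h3⟩ := this
  refine ⟨Γ, Δ.filter (· ≠ A), fun a ha => ?_, fun a ha => ?_, h3.mono (fun a ha => ha) (fun a ha => ?_)⟩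
  · simpa using h1 a ha
  · rw [Multiset.mem_filter] at ha
    have := h2 a ha.1
    simpa [ha.2] using this
  · by_cases e : a = A
    · simp [e]
    · simp [e, ha]

/-- Neighbourhoods. -/
def Nb (Ax : EAx) (w : World Ax) (U : Set (World Ax)) : Prop :=
  (Ax.n = true ∧ U = Set.univ) ∨
  ∃ L : List Fm, L ≠ [] ∧ (Ax.c = true ∨ L.length = 1) ∧ (∀ A ∈ L, Sum.inl (Fm.box A) ∈ w.1) ∧
    (∀ v : World Ax, (∀ A ∈ L, Sum.inl A ∈ v.1) → v ∈ U) ∧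
    (Ax.m = true ∨ ∀ A ∈ L, ∀ v ∈ U, Sum.inr A ∉ v.1)

def sat (Ax : EAx) : Fm → World Ax → Prop
  | .var n, w => Sum.inl (Fm.var n) ∈ w.1
  | .bot, _ => False
  | .top, _ => True
  | .neg A, w => ¬ sat Ax A w
  | .and A B, w => sat Ax A w ∧ sat Ax B w
  | .or A B, w => sat Ax A w ∨ sat Ax B w
  | .imp A B, w => sat Ax A w → sat Ax B w
  | .box A, w => Nb Ax w {v | sat Ax A v}

theorem evalP_sat (Ax : EAx) (w : World Ax) (A : Fm) :
    evalP (fun B => sat Ax B w) A ↔ sat Ax A w := by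
  induction A <;> simp_all [evalP, sat]

theorem soundness (Ax : EAx) (A : Fm) (h : EThm Ax A) : ∀ w, sat Ax A w := by
  induction h with
  | taut h => intro w; exact (evalP_sat Ax w _).1 (h _)
  | mp _ _ ih1 ih2 => intro w; exact ih1 w (ih2 w)
  | @cong A B _ _ ih1 ih2 =>
    intro w h
    have : {v | sat Ax A v} = {v | sat Ax B v} := Set.ext fun v => ⟨ih1 v, ih2 v⟩
    simpa only [sat, this] using h
  | @axM A B hm =>
    intro w h
    rcases h with ⟨hn, h⟩ | ⟨L, h1, h2, h3, h4, h5⟩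
    · have h' : ∀ v, sat Ax A v ∧ sat Ax B v := fun v => Set.eq_univ_iff_forall.1 h v
      exact ⟨Or.inl ⟨hn, Set.eq_univ_of_forall fun v => (h' v).1⟩,
        Or.inl ⟨hn, Set.eq_univ_of_forall fun v => (h' v).2⟩⟩
    · exact ⟨Or.inr ⟨L, h1, h2, h3, fun v hv => (h4 v hv).1, Or.inl hm⟩,
        Or.inr ⟨L, h1, h2, h3, fun v hv => (h4 v hv).2, Or.inl hm⟩⟩
  | @axC A B hc =>
    intro w h
    obtain ⟨h, k⟩ := h
    have key : {v | sat Ax (Fm.and A B) v} = {v | sat Ax A v} ∩ {v | sat Ax B v} := rfl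
    change Nb Ax w _
    rw [key]
    rcases h with ⟨hn, h⟩ | ⟨L, h1, h2, h3, h4, h5⟩
    · rw [h, Set.univ_inter]; exact k
    · rcases k with ⟨hn, k⟩ | ⟨K, k1, k2, k3, k4, k5⟩
      · rw [k, Set.inter_univ]; exact Or.inr ⟨L, h1, h2, h3, h4, h5⟩
      · refine Or.inr ⟨L ++ K, by simp [h1], Or.inl hc, ?_, ?_, ?_⟩
        · intro C hC
          rcases List.mem_append.1 hC with hC | hC
          · exact h3 C hC
          · exact k3 C hC
        · intro v hv
          exact ⟨h4 v fun C hC => hv C (List.mem_append_left _ hC),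
            k4 v fun C hC => hv C (List.mem_append_right _ hC)⟩
        · rcases h5 with h5 | h5
          · exact Or.inl h5
          rcases k5 with k5 | k5
          · exact Or.inl k5
          right
          intro C hC v hv
          rcases List.mem_append.1 hC with hC | hC
          · exact h5 C hC v hv.1
          · exact k5 C hC v hv.2
  | axN hn => intro w; exact Or.inl ⟨hn, Set.eq_univ_of_forall fun v => trivial⟩

theorem modal_aux {Ax : EAx} {Om : Multiset Fm} {B : Fm} (pre : List Cmp) (L : List Fm) :
    ∀ Sg : Multiset Fm, L ≠ [] → (Ax.c = true ∨ L.length = 1) →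
    SD Ax (↑L + Sg) {B} → (∀ A ∈ L, SD Ax Om {A}) →
    EDe Ax true true (pre ++ [((↑(L.map Fm.box) : Multiset Fm), (0 : Multiset Fm))], some ((Sg, {B}), (Om, 0))) := by
  induction L with
  | nil => intro _ h; exact absurd rfl h
  | cons A L ih =>
    intro Sg _ hc h1 h2
    rw [List.map_cons, ← Multiset.cons_coe]
    have hA : EDe Ax true true (pre ++ [((↑(L.map Fm.box) : Multiset Fm), (0 : Multiset Fm)), (Om, A ::ₘ 0)], none) := by
      have := h2 A (by simp) (pre ++ [((↑(L.map Fm.box) : Multiset Fm), (0 : Multiset Fm))])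
      simpa using this
    by_cases hL : L = []
    · subst hL
      refine EDe.boxLe ?_ hA
      have := h1 (pre ++ [((↑(List.map Fm.box []) : Multiset Fm), (0 : Multiset Fm))])
      simpa using this
    · have hc' : Ax.c = true := by
        rcases hc with hc | hc
        · exact hc
        · exact absurd (List.length_eq_zero_iff.1 (by simpa using hc)) hL
      refine EDe.ruleC hc' (ih _ hL (Or.inl hc') ?_ fun C hC => h2 C (by simp [hC])) hA
      rw [← Multiset.cons_coe] at h1
      rwa [Multiset.add_cons, ← Multiset.cons_add]

theorem modal {Ax : EAx} {B : Fm} (L : List Fm) (hL : L ≠ [])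
    (hc : Ax.c = true ∨ L.length = 1) (h1 : SD Ax ↑L {B})
    (h2 : Ax.m = true ∨ ∀ A ∈ L, SD Ax {B} {A}) :
    SD Ax ↑(L.map Fm.box) {Fm.box B} := by
  intro pre
  refine EDe.boxRe (Δ := 0) ?_
  rcases h2 with hm | h2
  · have := modal_aux (Om := Fm.bot ::ₘ {B}) pre L 0 hL hc (by simpa using h1)
      (fun A _ pre => EDe.botL)
    cases pre with
    | nil => exact EDe.ruleM hm this
    | cons c G => exact EDe.ruleM hm this
  · exact modal_aux pre L 0 hL hc (by simpa using h1) h2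

theorem truth (Ax : EAx) (A : Fm) : ∀ w : World Ax,
    (Sum.inl A ∈ w.1 → sat Ax A w) ∧ (Sum.inr A ∈ w.1 → ¬ sat Ax A w) := by
  induction A with
  | var n =>
    intro w
    refine ⟨id, fun h h' => ?_⟩
    exact w.2.1 {Fm.var n} {Fm.var n} (by simpa [sat] using h') (by simpa using h)
      fun pre => EDe.init (Γ := 0) (Δ := 0)
  | bot =>
    intro w
    exact ⟨fun h => w.2.1 {Fm.bot} 0 (by simpa using h) (by simp) fun pre => EDe.botL (Γ := 0),
      fun _ h => h⟩
  | top =>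
    intro w
    exact ⟨fun _ => trivial, fun h => absurd (fun pre => EDe.topR (Δ := 0))
      (w.2.1 0 {Fm.top} (by simp) (by simpa using h))⟩
  | neg A ih =>
    intro w
    constructor
    · intro h
      apply (ih w).2
      by_contra hn
      obtain ⟨Γ, Δ, h1, h2, h3⟩ := w.extR hn
      exact w.2.1 (Fm.neg A ::ₘ Γ) Δ (by simpa [h] using h1) h2 fun pre => EDe.negL (h3 pre)
    · intro h h'
      refine h' ((ih w).1 ?_)
      by_contra hn
      obtain ⟨Γ, Δ, h1, h2, h3⟩ := w.extL hn
      exact w.2.1 Γ (Fm.neg A ::ₘ Δ) h1 (by simpa [h] using h2) fun pre => EDe.negR (h3 pre)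
  | and A B ihA ihB =>
    intro w
    constructor
    · intro h
      refine ⟨(ihA w).1 ?_, (ihB w).1 ?_⟩
      · by_contra hn
        obtain ⟨Γ, Δ, h1, h2, h3⟩ := w.extL hn
        exact w.2.1 (Fm.and A B ::ₘ Γ) Δ (by simpa [h] using h1) h2
          fun pre => EDe.andL ((h3.mono (by simp +contextual) (by simp)) pre)
      · by_contra hn
        obtain ⟨Γ, Δ, h1, h2, h3⟩ := w.extL hn
        exact w.2.1 (Fm.and A B ::ₘ Γ) Δ (by simpa [h] using h1) h2
          fun pre => EDe.andL ((h3.mono (by simp +contextual) (by simp)) pre)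
    · rintro h ⟨hA, hB⟩
      have nA : Sum.inr A ∉ w.1 := fun k => (ihA w).2 k hA
      have nB : Sum.inr B ∉ w.1 := fun k => (ihB w).2 k hB
      obtain ⟨Γ, Δ, h1, h2, h3⟩ := w.extR nA
      obtain ⟨Γ', Δ', k1, k2, k3⟩ := w.extR nB
      refine w.2.1 (Γ + Γ') (Fm.and A B ::ₘ (Δ + Δ')) ?_ ?_ fun pre => EDe.andR
        ((h3.mono ?_ ?_) pre) ((k3.mono ?_ ?_) pre) <;> grind
  | or A B ihA ihB =>
    intro w
    constructor
    · intro h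
      by_contra hn
      have nA : Sum.inl A ∉ w.1 := fun k => hn (Or.inl ((ihA w).1 k))
      have nB : Sum.inl B ∉ w.1 := fun k => hn (Or.inr ((ihB w).1 k))
      obtain ⟨Γ, Δ, h1, h2, h3⟩ := w.extL nA
      obtain ⟨Γ', Δ', k1, k2, k3⟩ := w.extL nB
      refine w.2.1 (Fm.or A B ::ₘ (Γ + Γ')) (Δ + Δ') ?_ ?_ fun pre => EDe.orL
        ((h3.mono ?_ ?_) pre) ((k3.mono ?_ ?_) pre) <;> grind
    · rintro h (hA | hB)
      · refine (ihA w).2 ?_ hA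
        by_contra hn
        obtain ⟨Γ, Δ, h1, h2, h3⟩ := w.extR hn
        exact w.2.1 Γ (Fm.or A B ::ₘ Δ) h1 (by simpa [h] using h2)
          fun pre => EDe.orR ((h3.mono (by simp) (by simp +contextual)) pre)
      · refine (ihB w).2 ?_ hB
        by_contra hn
        obtain ⟨Γ, Δ, h1, h2, h3⟩ := w.extR hn
        exact w.2.1 Γ (Fm.or A B ::ₘ Δ) h1 (by simpa [h] using h2)
          fun pre => EDe.orR ((h3.mono (by simp) (by simp +contextual)) pre)
  | imp A B ihA ihB =>
    intro w
    constructor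
    · intro h hA
      by_contra hB
      have nA : Sum.inr A ∉ w.1 := fun k => (ihA w).2 k hA
      have nB : Sum.inl B ∉ w.1 := fun k => hB ((ihB w).1 k)
      obtain ⟨Γ, Δ, h1, h2, h3⟩ := w.extR nA
      obtain ⟨Γ', Δ', k1, k2, k3⟩ := w.extL nB
      refine w.2.1 (Fm.imp A B ::ₘ (Γ + Γ')) (Δ + Δ') ?_ ?_ fun pre => EDe.impL
        ((k3.mono ?_ ?_) pre) ((h3.mono ?_ ?_) pre) <;> grind
    · intro h h'
      have hA : Sum.inl A ∈ w.1 := by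
        by_contra hn
        obtain ⟨Γ, Δ, h1, h2, h3⟩ := w.extL hn
        exact w.2.1 Γ (Fm.imp A B ::ₘ Δ) h1 (by simpa [h] using h2)
          fun pre => EDe.impR ((h3.mono (by simp) (by simp +contextual)) pre)
      refine (ihB w).2 ?_ (h' ((ihA w).1 hA))
      by_contra hn
      obtain ⟨Γ, Δ, h1, h2, h3⟩ := w.extR hn
      exact w.2.1 Γ (Fm.imp A B ::ₘ Δ) h1 (by simpa [h] using h2)
        fun pre => EDe.impR ((h3.mono (by simp +contextual) (by simp)) pre)
  | box B ih =>
    intro w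
    constructor
    · intro h
      refine Or.inr ⟨[B], by simp, Or.inr rfl, by simpa using h, ?_, Or.inr ?_⟩
      · intro v hv; exact (ih v).1 (hv B (by simp))
      · intro A hA v hv hn
        rw [List.mem_singleton] at hA
        subst hA
        exact (ih v).2 hn hv
    · intro h h'
      rcases h' with ⟨hn, hU⟩ | ⟨L, h1, h2, h3, h4, h5⟩
      · have hB : SD Ax 0 {B} := by
          by_contra hS
          obtain ⟨v, _, hv⟩ := exists_world hS
          have : v ∈ {v | sat Ax B v} := hU.symm ▸ Set.mem_univ v
          exact (ih v).2 (hv B (by simp)) this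
        refine w.2.1 0 {Fm.box B} (by simp) (by simpa using h) fun pre =>
          EDe.ruleN (Δ := 0) hn ?_
        have := hB (pre ++ [(0, 0)])
        simpa using this
      · refine w.2.1 ↑(L.map Fm.box) {Fm.box B} ?_ (by simpa using h)
          (modal L h1 h2 ?_ ?_)
        · simpa using h3
        · by_contra hS
          obtain ⟨v, hv, hv'⟩ := exists_world hS
          exact (ih v).2 (hv' B (by simp)) (h4 v hv)
        · rcases h5 with h5 | h5
          · exact Or.inl h5
          · right
            intro A hA
            by_contra hS
            obtain ⟨v, hv, hv'⟩ := exists_world hS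
            exact h5 A hA v ((ih v).1 (hv B (by simp))) (hv' A (by simp))

/-- Completeness of the end-active variant of `LNS_E𝒜ConW` for the non-normal
modal logic `E𝒜` (`𝒜 ⊆ {M, C, N}`): if `A ∈ E𝒜` then `⇒ A` is derivable in
the end-active variant of `LNS_E𝒜ConW`. -/
theorem endActive_LNSe_complete (Ax : EAx) (A : Fm) (h : EThm Ax A) :
    EDe Ax true true ([(0, {A})], none) := by
  suffices hS : SD Ax 0 {A} from hS []
  by_contra hS
  obtain ⟨v, _, hv⟩ := exists_world hS
  exact (truth Ax A v).2 (hv A (by simp)) (soundness Ax A h v)
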